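/- Let Ĝ be the result of eliminating the function symbol f from the EUF formula G by the nested-ITE construction with fresh domain variables vf_1,...,vf_n. Any interpretation J of the symbols occurring in G can be extended to an interpretation Ĵ of the symbols occurring in both G and Ĝ such that for every subexpression E of G, Ĵ[Ê] = Ĵ[E] = J[E]. -/

import Mathlib

mutual
inductive EufTerm (Fn Pr : Type) : Type
  | app : Fn → List (EufTerm Fn Pr) → EufTerm Fn Pr
  | ite : EufFormula Fn Pr → EufTerm Fn Pr → EufTerm Fn Pr → EufTerm Fn Pr
inductive EufFormula (Fn Pr : Type) : Type
  | tt : EufFormula Fn Pr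
  | ff : EufFormula Fn Pr
  | not : EufFormula Fn Pr → EufFormula Fn Pr
  | and : EufFormula Fn Pr → EufFormula Fn Pr → EufFormula Fn Pr
  | or : EufFormula Fn Pr → EufFormula Fn Pr → EufFormula Fn Pr
  | eq : EufTerm Fn Pr → EufTerm Fn Pr → EufFormula Fn Pr
  | papp : Pr → List (EufTerm Fn Pr) → EufFormula Fn Pr
end

structure Interp (Fn Pr : Type) (D : Type u) where
  fn : Fn → List D → D
  pr : Pr → List D → Bool

open Classical in
mutual
noncomputable def evalT {Fn Pr : Type} {D : Type} (I : Interp Fn Pr D) : EufTerm Fn Pr → D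
  | .app f args => I.fn f (args.attach.map (fun t => evalT I t.1))
  | .ite G T1 T2 => if evalF I G then evalT I T1 else evalT I T2
termination_by t => sizeOf t
decreasing_by
  all_goals simp_wf
  all_goals try omega
  all_goals (have := List.sizeOf_lt_of_mem t.2; omega)
noncomputable def evalF {Fn Pr : Type} {D : Type} (I : Interp Fn Pr D) : EufFormula Fn Pr → Bool
  | .tt => true
  | .ff => false
  | .not G => !evalF I G
  | .and G1 G2 => evalF I G1 && evalF I G2
  | .or G1 G2 => evalF I G1 || evalF I G2
  | .eq T1 T2 => decide (evalT I T1 = evalT I T2)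
  | .papp p args => I.pr p (args.attach.map (fun t => evalT I t.1))
termination_by g => sizeOf g
decreasing_by
  all_goals simp_wf
  all_goals try omega
  all_goals (have := List.sizeOf_lt_of_mem t.2; omega)
end
def ValidOn {Fn Pr : Type} (F : EufFormula Fn Pr) (D : Type) : Prop :=
  ∀ I : Interp Fn Pr D, evalF I F = true

def UniversallyValid {Fn Pr : Type} (F : EufFormula Fn Pr) : Prop :=
  ∀ D : Type, Nonempty D → ValidOn F D

/-- Expressions: terms or formulas. -/
inductive EufExpr (Fn Pr : Type) : Type
  | t : EufTerm Fn Pr → EufExpr Fn Pr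
  | f : EufFormula Fn Pr → EufExpr Fn Pr

/-- Immediate (proper) subexpression relation. -/
inductive ImmSub {Fn Pr : Type} : EufExpr Fn Pr → EufExpr Fn Pr → Prop
  | appArg {g : Fn} {args : List (EufTerm Fn Pr)} {T : EufTerm Fn Pr} :
      T ∈ args → ImmSub (.t T) (.t (.app g args))
  | iteC {G : EufFormula Fn Pr} {T1 T2 : EufTerm Fn Pr} : ImmSub (.f G) (.t (.ite G T1 T2))
  | ite1 {G : EufFormula Fn Pr} {T1 T2 : EufTerm Fn Pr} : ImmSub (.t T1) (.t (.ite G T1 T2))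
  | ite2 {G : EufFormula Fn Pr} {T1 T2 : EufTerm Fn Pr} : ImmSub (.t T2) (.t (.ite G T1 T2))
  | not {G : EufFormula Fn Pr} : ImmSub (.f G) (.f (.not G))
  | andL {G1 G2 : EufFormula Fn Pr} : ImmSub (.f G1) (.f (.and G1 G2))
  | andR {G1 G2 : EufFormula Fn Pr} : ImmSub (.f G2) (.f (.and G1 G2))
  | orL {G1 G2 : EufFormula Fn Pr} : ImmSub (.f G1) (.f (.or G1 G2))
  | orR {G1 G2 : EufFormula Fn Pr} : ImmSub (.f G2) (.f (.or G1 G2))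
  | eqL {T1 T2 : EufTerm Fn Pr} : ImmSub (.t T1) (.f (.eq T1 T2))
  | eqR {T1 T2 : EufTerm Fn Pr} : ImmSub (.t T2) (.f (.eq T1 T2))
  | pappArg {p : Pr} {args : List (EufTerm Fn Pr)} {T : EufTerm Fn Pr} :
      T ∈ args → ImmSub (.t T) (.f (.papp p args))

/-- `SubExpr a b`: `a` occurs (as a subexpression) in `b`. -/
def SubExpr {Fn Pr : Type} (a b : EufExpr Fn Pr) : Prop := Relation.ReflTransGen ImmSub a b

def TermInT {Fn Pr : Type} (T S : EufTerm Fn Pr) : Prop := SubExpr (.t T) (.t S)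
def TermInF {Fn Pr : Type} (T : EufTerm Fn Pr) (F : EufFormula Fn Pr) : Prop :=
  SubExpr (.t T) (.f F)
def FormulaInT {Fn Pr : Type} (G : EufFormula Fn Pr) (S : EufTerm Fn Pr) : Prop :=
  SubExpr (.f G) (.t S)
def FormulaInF {Fn Pr : Type} (G F : EufFormula Fn Pr) : Prop := SubExpr (.f G) (.f F)

def IsAppTerm {Fn Pr : Type} : EufTerm Fn Pr → Prop
  | .app _ _ => True
  | _ => False

/-- `𝒯(F)`: the function application terms occurring in `F`. -/
def AppTermsF {Fn Pr : Type} (F : EufFormula Fn Pr) : Set (EufTerm Fn Pr) :=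
  {T | IsAppTerm T ∧ TermInF T F}

/-- A function symbol occurs in `F` when some application of it occurs in `F`. -/
def FnInF {Fn Pr : Type} (g : Fn) (F : EufFormula Fn Pr) : Prop :=
  ∃ args, TermInF (EufTerm.app g args) F

def PrInF {Fn Pr : Type} (p : Pr) (F : EufFormula Fn Pr) : Prop :=
  ∃ args, FormulaInF (EufFormula.papp p args) F

/-- `I` is diverse for `F` with respect to the set `Sg` of function symbols. -/
def DiverseFor {Fn Pr D : Type} (I : Interp Fn Pr D) (F : EufFormula Fn Pr)
    (Sg : Set Fn) : Prop :=
  ∀ (g : Fn) (args : List (EufTerm Fn Pr)), g ∈ Sg →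
    TermInF (EufTerm.app g args) F →
    ∀ T2 ∈ AppTermsF F, evalT I (EufTerm.app g args) = evalT I T2 →
      ∃ args2, T2 = EufTerm.app g args2 ∧
        List.Forall₂ (fun a b => evalT I a = evalT I b) args args2

mutual
/-- PEUF g-terms, where `isP` designates the p-function symbols. -/
inductive IsGTerm {Fn Pr : Type} (isP : Fn → Prop) : EufTerm Fn Pr → Prop
  | ite {G : EufFormula Fn Pr} {T1 T2 : EufTerm Fn Pr} :
      IsGFormula isP G → IsGTerm isP T1 → IsGTerm isP T2 → IsGTerm isP (.ite G T1 T2)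
  | app {g : Fn} {args : List (EufTerm Fn Pr)} :
      ¬ isP g → (∀ T ∈ args, IsPTerm isP T) → IsGTerm isP (.app g args)
/-- PEUF p-terms. -/
inductive IsPTerm {Fn Pr : Type} (isP : Fn → Prop) : EufTerm Fn Pr → Prop
  | g {T : EufTerm Fn Pr} : IsGTerm isP T → IsPTerm isP T
  | ite {G : EufFormula Fn Pr} {T1 T2 : EufTerm Fn Pr} :
      IsGFormula isP G → IsPTerm isP T1 → IsPTerm isP T2 → IsPTerm isP (.ite G T1 T2)
  | app {g : Fn} {args : List (EufTerm Fn Pr)} :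
      isP g → (∀ T ∈ args, IsPTerm isP T) → IsPTerm isP (.app g args)
/-- PEUF g-formulas. -/
inductive IsGFormula {Fn Pr : Type} (isP : Fn → Prop) : EufFormula Fn Pr → Prop
  | tt : IsGFormula isP .tt
  | ff : IsGFormula isP .ff
  | not {G : EufFormula Fn Pr} : IsGFormula isP G → IsGFormula isP (.not G)
  | and {G1 G2 : EufFormula Fn Pr} :
      IsGFormula isP G1 → IsGFormula isP G2 → IsGFormula isP (.and G1 G2)
  | or {G1 G2 : EufFormula Fn Pr} :
      IsGFormula isP G1 → IsGFormula isP G2 → IsGFormula isP (.or G1 G2)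
  | eq {T1 T2 : EufTerm Fn Pr} :
      IsGTerm isP T1 → IsGTerm isP T2 → IsGFormula isP (.eq T1 T2)
  | papp {p : Pr} {args : List (EufTerm Fn Pr)} :
      (∀ T ∈ args, IsPTerm isP T) → IsGFormula isP (.papp p args)
/-- PEUF p-formulas. -/
inductive IsPFormula {Fn Pr : Type} (isP : Fn → Prop) : EufFormula Fn Pr → Prop
  | g {G : EufFormula Fn Pr} : IsGFormula isP G → IsPFormula isP G
  | and {G1 G2 : EufFormula Fn Pr} :
      IsPFormula isP G1 → IsPFormula isP G2 → IsPFormula isP (.and G1 G2)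
  | or {G1 G2 : EufFormula Fn Pr} :
      IsPFormula isP G1 → IsPFormula isP G2 → IsPFormula isP (.or G1 G2)
  | eq {T1 T2 : EufTerm Fn Pr} :
      IsPTerm isP T1 → IsPTerm isP T2 → IsPFormula isP (.eq T1 T2)
end

/-- The p-function symbols occurring in `F`. -/
def PSymbolsIn {Fn Pr : Type} (isP : Fn → Prop) (F : EufFormula Fn Pr) : Set Fn :=
  {g | isP g ∧ FnInF g F}

/-- `I` is maximally diverse for the p-formula `F`. -/
def MaxDiverse {Fn Pr D : Type} (isP : Fn → Prop) (I : Interp Fn Pr D)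
    (F : EufFormula Fn Pr) : Prop :=
  DiverseFor I F (PSymbolsIn isP F)

/-- `I'` refines `I` on the term set `Ts`. -/
def RefinesOn {Fn Pr D D' : Type} (I' : Interp Fn Pr D') (I : Interp Fn Pr D)
    (Ts : Set (EufTerm Fn Pr)) : Prop :=
  ∀ T1 ∈ Ts, ∀ T2 ∈ Ts, evalT I' T1 = evalT I' T2 → evalT I T1 = evalT I T2

def ProperRefinesOn {Fn Pr D D' : Type} (I' : Interp Fn Pr D') (I : Interp Fn Pr D)
    (Ts : Set (EufTerm Fn Pr)) : Prop :=
  RefinesOn I' I Ts ∧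
    ∃ T1 ∈ Ts, ∃ T2 ∈ Ts, evalT I T1 = evalT I T2 ∧ evalT I' T1 ≠ evalT I' T2
open Classical in
mutual
/-- Substitute the term `B` for each instance of the term `A`. -/
noncomputable def substT {Fn Pr : Type} (A B : EufTerm Fn Pr) : EufTerm Fn Pr → EufTerm Fn Pr
  | .app g args =>
      if EufTerm.app g args = A then B
      else .app g (args.attach.map (fun t => substT A B t.1))
  | .ite G T1 T2 =>
      if EufTerm.ite G T1 T2 = A then B
      else .ite (substF A B G) (substT A B T1) (substT A B T2)
termination_by t => sizeOf t
decreasing_by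
  all_goals simp_wf
  all_goals try omega
  all_goals (have := List.sizeOf_lt_of_mem t.2; omega)
noncomputable def substF {Fn Pr : Type} (A B : EufTerm Fn Pr) : EufFormula Fn Pr → EufFormula Fn Pr
  | .tt => .tt
  | .ff => .ff
  | .not G => .not (substF A B G)
  | .and G1 G2 => .and (substF A B G1) (substF A B G2)
  | .or G1 G2 => .or (substF A B G1) (substF A B G2)
  | .eq T1 T2 => .eq (substT A B T1) (substT A B T2)
  | .papp p args => .papp p (args.attach.map (fun t => substT A B t.1))
termination_by g => sizeOf g
decreasing_by
  all_goals simp_wf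
  all_goals try omega
  all_goals (have := List.sizeOf_lt_of_mem t.2; omega)
end

open Classical in
mutual
/-- Substitute the formula `B` for each instance of the formula `A` inside a term. -/
noncomputable def fsubstT {Fn Pr : Type} (A B : EufFormula Fn Pr) : EufTerm Fn Pr → EufTerm Fn Pr
  | .app g args => .app g (args.attach.map (fun t => fsubstT A B t.1))
  | .ite G T1 T2 => .ite (fsubstF A B G) (fsubstT A B T1) (fsubstT A B T2)
termination_by t => sizeOf t
decreasing_by
  all_goals simp_wf
  all_goals try omega
  all_goals (have := List.sizeOf_lt_of_mem t.2; omega)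
/-- Substitute the formula `B` for each instance of the formula `A`. -/
noncomputable def fsubstF {Fn Pr : Type} (A B : EufFormula Fn Pr) : EufFormula Fn Pr → EufFormula Fn Pr
  | .tt => if EufFormula.tt = A then B else .tt
  | .ff => if EufFormula.ff = A then B else .ff
  | .not G => if EufFormula.not G = A then B else .not (fsubstF A B G)
  | .and G1 G2 => if EufFormula.and G1 G2 = A then B else .and (fsubstF A B G1) (fsubstF A B G2)
  | .or G1 G2 => if EufFormula.or G1 G2 = A then B else .or (fsubstF A B G1) (fsubstF A B G2)
  | .eq T1 T2 => if EufFormula.eq T1 T2 = A then B else .eq (fsubstT A B T1) (fsubstT A B T2)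
  | .papp p args =>
      if EufFormula.papp p args = A then B
      else .papp p (args.attach.map (fun t => fsubstT A B t.1))
termination_by g => sizeOf g
decreasing_by
  all_goals simp_wf
  all_goals try omega
  all_goals (have := List.sizeOf_lt_of_mem t.2; omega)
end
/-- The formula `C_{i,j}`: conjunction of the equations between transformed arguments. -/
def Cform {Fn Pr : Type} (hatS : ℕ → ℕ → EufTerm Fn Pr) (k i j : ℕ) : EufFormula Fn Pr :=
  ((List.range' 1 k).map (fun l => EufFormula.eq (hatS i l) (hatS j l))).foldr .and .tt

/-- The nested-ITE term `V_{i,j}`. -/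
def Vterm {Fn Pr : Type} (vf : ℕ → Fn) (hatS : ℕ → ℕ → EufTerm Fn Pr) (k i : ℕ) :
    ℕ → EufTerm Fn Pr
  | j =>
    if h : j < i then
      .ite (Cform hatS k i j) (.app (vf j) []) (Vterm vf hatS k i (j+1))
    else .app (vf i) []
termination_by j => i - j
decreasing_by omega

/-- The nested-ITE term `U_i` replacing the i-th f-application. -/
def Uterm {Fn Pr : Type} (vf : ℕ → Fn) (hatS : ℕ → ℕ → EufTerm Fn Pr) (k i : ℕ) :
    EufTerm Fn Pr :=
  Vterm vf hatS k i 1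

/-- `stepT … i E = E⁽ⁱ⁾` for terms. -/
noncomputable def stepT {Fn Pr : Type} (Ts : ℕ → EufTerm Fn Pr) (vf : ℕ → Fn)
    (hatS : ℕ → ℕ → EufTerm Fn Pr) (k : ℕ) : ℕ → EufTerm Fn Pr → EufTerm Fn Pr
  | 0, E => E
  | i+1, E =>
      substT (stepT Ts vf hatS k i (Ts (i+1))) (Uterm vf hatS k (i+1)) (stepT Ts vf hatS k i E)

/-- `stepF … i E = E⁽ⁱ⁾` for formulas. -/
noncomputable def stepF {Fn Pr : Type} (Ts : ℕ → EufTerm Fn Pr) (vf : ℕ → Fn)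
    (hatS : ℕ → ℕ → EufTerm Fn Pr) (k : ℕ) : ℕ → EufFormula Fn Pr → EufFormula Fn Pr
  | 0, E => E
  | i+1, E =>
      substF (stepT Ts vf hatS k i (Ts (i+1))) (Uterm vf hatS k (i+1)) (stepF Ts vf hatS k i E)

/-- The f-order of a term: the largest index `i ∈ [1,n]` with `Ts i` occurring in `E`. -/
noncomputable def fordT {Fn Pr : Type} (n : ℕ) (Ts : ℕ → EufTerm Fn Pr)
    (E : EufTerm Fn Pr) : ℕ :=
  sSup {i | 1 ≤ i ∧ i ≤ n ∧ TermInT (Ts i) E}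

/-- The f-order of a formula. -/
noncomputable def fordF {Fn Pr : Type} (n : ℕ) (Ts : ℕ → EufTerm Fn Pr)
    (E : EufFormula Fn Pr) : ℕ :=
  sSup {i | 1 ≤ i ∧ i ≤ n ∧ TermInF (Ts i) E}

/-- `Ê` for terms: `E⁽ᵐ⁾` where `m` is the f-order of `E`. -/
noncomputable def hatT {Fn Pr : Type} (n : ℕ) (Ts : ℕ → EufTerm Fn Pr) (vf : ℕ → Fn)
    (hatS : ℕ → ℕ → EufTerm Fn Pr) (k : ℕ) (E : EufTerm Fn Pr) : EufTerm Fn Pr :=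
  stepT Ts vf hatS k (fordT n Ts E) E

/-- `Ê` for formulas. -/
noncomputable def hatF {Fn Pr : Type} (n : ℕ) (Ts : ℕ → EufTerm Fn Pr) (vf : ℕ → Fn)
    (hatS : ℕ → ℕ → EufTerm Fn Pr) (k : ℕ) (E : EufFormula Fn Pr) : EufFormula Fn Pr :=
  stepF Ts vf hatS k (fordF n Ts E) E

/-- Hypotheses of the nested-ITE elimination of the function symbol `f` from `G`:
`Ts 1, …, Ts n` are the syntactically distinct f-application terms of `G` (ordered so that
subterms precede superterms) with argument terms `S i 1, …, S i k`; the `vf i` are fresh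
domain variables; and `hatS i l` is the transformed argument term `Ŝ_{i,l}`. -/
structure ElimHyps {Fn Pr : Type} (G : EufFormula Fn Pr) (f : Fn) (k n : ℕ)
    (Ts : ℕ → EufTerm Fn Pr) (S : ℕ → ℕ → EufTerm Fn Pr) (vf : ℕ → Fn)
    (hatS : ℕ → ℕ → EufTerm Fn Pr) : Prop where
  k_pos : 1 ≤ k
  ts_app : ∀ i, 1 ≤ i → i ≤ n → Ts i = EufTerm.app f ((List.range' 1 k).map (S i))
  ts_occurs : ∀ i, 1 ≤ i → i ≤ n → TermInF (Ts i) G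
  ts_distinct : ∀ i j, 1 ≤ i → i ≤ n → 1 ≤ j → j ≤ n → Ts i = Ts j → i = j
  ts_complete : ∀ args, TermInF (EufTerm.app f args) G →
      ∃ i, 1 ≤ i ∧ i ≤ n ∧ EufTerm.app f args = Ts i
  ts_order : ∀ i j, 1 ≤ i → i ≤ n → 1 ≤ j → j ≤ n → TermInT (Ts i) (Ts j) → i ≠ j → i < j
  vf_fresh : ∀ i, 1 ≤ i → i ≤ n → ¬ FnInF (vf i) G
  vf_inj : ∀ i j, 1 ≤ i → i ≤ n → 1 ≤ j → j ≤ n → vf i = vf j → i = j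
  vf_ne_f : ∀ i, 1 ≤ i → i ≤ n → vf i ≠ f
  hatS_spec : ∀ j l, 1 ≤ j → j ≤ n → 1 ≤ l → l ≤ k →
      hatS j l = stepT Ts vf hatS k (fordT n Ts (S j l)) (S j l)

/-- `Ĝ = G⁽ⁿ⁾`: the result of eliminating `f` from `G`. -/
noncomputable def elimResult {Fn Pr : Type} (G : EufFormula Fn Pr) (n : ℕ)
    (Ts : ℕ → EufTerm Fn Pr) (vf : ℕ → Fn) (hatS : ℕ → ℕ → EufTerm Fn Pr) (k : ℕ) :
    EufFormula Fn Pr :=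
  stepF Ts vf hatS k n G

/-!
Let `Ĵ` interpret each fresh variable `vf i` as the value `J[T_i]`. Under `Ĵ` the nested `ITE` term
`U_i` selects `vf j` for the least `j` at which the arguments of `T_j` and `T_i` have equal values;
as `f` is interpreted by a function, `T_j` and `T_i` are then equal too, so `U_i` and `T_i` have the
same value. Hence no substitution `T_i ← U_i` changes the value of any expression. The induction on
`i` is sound because the arguments of `T_j` have `f`-order less than `j`, so that the `Ŝ_{j,l}`
occurring in `U_i` are obtained by steps preceding the `i`-th one.
-/

section Evaluation

variable {Fn Pr D : Type} {I J : Interp Fn Pr D}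

theorem evalT_app (I : Interp Fn Pr D) (g : Fn) (args : List (EufTerm Fn Pr)) :
    evalT I (.app g args) = I.fn g (args.map (evalT I)) := by
  rw [evalT, List.attach_map_val (f := evalT I)]

theorem evalF_papp (I : Interp Fn Pr D) (p : Pr) (args : List (EufTerm Fn Pr)) :
    evalF I (.papp p args) = I.pr p (args.map (evalT I)) := by
  rw [evalF, List.attach_map_val (f := evalT I)]

section Substitution

variable {A B : EufTerm Fn Pr}

mutual

theorem evalT_substT (h : evalT I A = evalT I B) :
    ∀ T : EufTerm Fn Pr, evalT I (substT A B T) = evalT I T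
  | .app g args => by
      rw [substT, List.attach_map_val (f := substT A B)]
      split_ifs with hA
      · rw [hA, h]
      · have hargs : (args.map (substT A B)).map (evalT I) = args.map (evalT I) := by
          rw [List.map_map]
          exact List.map_congr_left fun t _ => evalT_substT h t
        rw [evalT_app, evalT_app, hargs]
  | .ite F T₁ T₂ => by
      rw [substT]
      split_ifs with hA
      · rw [hA, h]
      · rw [evalT, evalT, evalF_substF h F, evalT_substT h T₁, evalT_substT h T₂]

theorem evalF_substF (h : evalT I A = evalT I B) :
    ∀ F : EufFormula Fn Pr, evalF I (substF A B F) = evalF I F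
  | .tt => by rw [substF]
  | .ff => by rw [substF]
  | .not F => by rw [substF, evalF, evalF, evalF_substF h F]
  | .and F₁ F₂ => by rw [substF, evalF, evalF, evalF_substF h F₁, evalF_substF h F₂]
  | .or F₁ F₂ => by rw [substF, evalF, evalF, evalF_substF h F₁, evalF_substF h F₂]
  | .eq T₁ T₂ => by rw [substF, evalF, evalF, evalT_substT h T₁, evalT_substT h T₂]
  | .papp p args => by
      have hargs : (args.map (substT A B)).map (evalT I) = args.map (evalT I) := by
        rw [List.map_map]
        exact List.map_congr_left fun t _ => evalT_substT h t
      rw [substF, List.attach_map_val (f := substT A B), evalF_papp, evalF_papp, hargs]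

end

end Substitution

/-- Two interpretations agree on an expression if they give the same meaning to every function
and predicate symbol occurring in it; thus `Ĵ` extends an interpretation `J` of the symbols of `G`
if the two agree on `G`. -/
def AgreeOn (I J : Interp Fn Pr D) (E : EufExpr Fn Pr) : Prop :=
  (∀ g args, SubExpr (.t (.app g args)) E → I.fn g = J.fn g) ∧
    ∀ p args, SubExpr (.f (.papp p args)) E → I.pr p = J.pr p

theorem AgreeOn.mono {E E' : EufExpr Fn Pr} (h : AgreeOn I J E) (hE : SubExpr E' E) :
    AgreeOn I J E' :=
  ⟨fun g args hg => h.1 g args (hg.trans hE), fun p args hp => h.2 p args (hp.trans hE)⟩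

theorem AgreeOn.of_immSub {E E' : EufExpr Fn Pr} (h : AgreeOn I J E) (hE : ImmSub E' E) :
    AgreeOn I J E' :=
  h.mono (.single hE)

mutual

theorem AgreeOn.evalT_eq : ∀ {T : EufTerm Fn Pr}, AgreeOn I J (.t T) → evalT I T = evalT J T
  | .app g args, h => by
      have hargs : args.map (evalT I) = args.map (evalT J) :=
        List.map_congr_left fun t ht => (h.of_immSub (.appArg ht)).evalT_eq
      rw [evalT_app, evalT_app, h.1 g args .refl, hargs]
  | .ite F T₁ T₂, h => by
      rw [evalT, evalT, (h.of_immSub .iteC).evalF_eq, (h.of_immSub .ite1).evalT_eq,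
        (h.of_immSub .ite2).evalT_eq]

theorem AgreeOn.evalF_eq : ∀ {F : EufFormula Fn Pr}, AgreeOn I J (.f F) → evalF I F = evalF J F
  | .tt, _ => by rw [evalF, evalF]
  | .ff, _ => by rw [evalF, evalF]
  | .not F, h => by rw [evalF, evalF, (h.of_immSub .not).evalF_eq]
  | .and F₁ F₂, h => by
      rw [evalF, evalF, (h.of_immSub .andL).evalF_eq, (h.of_immSub .andR).evalF_eq]
  | .or F₁ F₂, h => by
      rw [evalF, evalF, (h.of_immSub .orL).evalF_eq, (h.of_immSub .orR).evalF_eq]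
  | .eq T₁ T₂, h => by
      rw [evalF, evalF, (h.of_immSub .eqL).evalT_eq, (h.of_immSub .eqR).evalT_eq]
  | .papp p args, h => by
      have hargs : args.map (evalT I) = args.map (evalT J) :=
        List.map_congr_left fun t ht => (h.of_immSub (.pappArg ht)).evalT_eq
      rw [evalF_papp, evalF_papp, h.2 p args .refl, hargs]

end

open Classical in
/-- The interpretation that assigns the value `d i` to the domain variable `v i` for every `i ∈ s`
and coincides with `J` on all other symbols. The values are meaningful for `v` injective on `s`. -/
noncomputable def Interp.assignVars {ι : Type*} [Nonempty ι] (J : Interp Fn Pr D) (s : Set ι)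
    (v : ι → Fn) (d : ι → D) : Interp Fn Pr D where
  fn g := if g ∈ v '' s then fun _ => d (Function.invFunOn v s g) else J.fn g
  pr := J.pr

section AssignVars

variable {ι : Type*} [Nonempty ι] {s : Set ι} {v : ι → Fn}

theorem Interp.assignVars_fn_apply (J : Interp Fn Pr D) (hv : Set.InjOn v s) (d : ι → D) {i : ι}
    (hi : i ∈ s) (args : List D) : (J.assignVars s v d).fn (v i) args = d i := by
  simp only [assignVars, if_pos (Set.mem_image_of_mem v hi), hv.leftInvOn_invFunOn hi]

theorem AgreeOn.assignVars (J : Interp Fn Pr D) (d : ι → D) {E : EufExpr Fn Pr}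
    (hv : ∀ i ∈ s, ∀ args, ¬ SubExpr (.t (.app (v i) args)) E) :
    AgreeOn (J.assignVars s v d) J E := by
  refine ⟨fun g args hg => if_neg ?_, fun _ _ _ => rfl⟩
  rintro ⟨i, hi, rfl⟩
  exact hv i hi args hg

end AssignVars

end Evaluation

section Subexpression

variable {Fn Pr : Type}

theorem ImmSub.sizeOf_lt {E E' : EufExpr Fn Pr} (h : ImmSub E E') : sizeOf E < sizeOf E' := by
  cases h with
  | appArg hT | pappArg hT =>
    have hlt := List.sizeOf_lt_of_mem hT
    simp only [EufExpr.t.sizeOf_spec, EufExpr.f.sizeOf_spec, EufTerm.app.sizeOf_spec,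
      EufFormula.papp.sizeOf_spec]
    omega
  | _ => simp +arith

theorem SubExpr.sizeOf_le {E E' : EufExpr Fn Pr} (h : SubExpr E E') : sizeOf E ≤ sizeOf E' := by
  induction h with
  | refl => exact le_rfl
  | tail _ hE ih => exact ih.trans hE.sizeOf_lt.le

theorem ImmSub.not_subExpr {E E' : EufExpr Fn Pr} (h : ImmSub E E') : ¬ SubExpr E' E :=
  fun h' => h'.sizeOf_le.not_gt h.sizeOf_lt

end Subexpression

section Elimination

variable {Fn Pr D : Type} {I : Interp Fn Pr D} {f : Fn} {k n : ℕ} {Ts : ℕ → EufTerm Fn Pr}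
  {S : ℕ → ℕ → EufTerm Fn Pr} {vf : ℕ → Fn} {hatS : ℕ → ℕ → EufTerm Fn Pr}

theorem evalF_foldr_and {L : List (EufFormula Fn Pr)} :
    evalF I (L.foldr .and .tt) = true ↔ ∀ F ∈ L, evalF I F = true := by
  induction L with
  | nil => simp [evalF]
  | cons F L ih => simp [evalF, ih]

theorem evalF_Cform {i j : ℕ} :
    evalF I (Cform hatS k i j) = true ↔
      (List.range' 1 k).map (fun l => evalT I (hatS i l)) =
        (List.range' 1 k).map fun l => evalT I (hatS j l) := by
  rw [Cform, evalF_foldr_and, List.map_inj_left, List.forall_mem_map]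
  simp only [evalF, decide_eq_true_eq]

theorem evalT_Vterm {d : D} {i j : ℕ} (hi : I.fn (vf i) [] = d)
    (hj : ∀ m, j ≤ m → m < i → evalF I (Cform hatS k i m) = true → I.fn (vf m) [] = d) :
    evalT I (Vterm vf hatS k i j) = d := by
  rw [Vterm]
  split_ifs with hji
  · rw [evalT]
    split_ifs with hC
    · rw [evalT_app, List.map_nil, hj j le_rfl hji hC]
    · exact evalT_Vterm hi fun m hm => hj m (Nat.le_of_succ_le hm)
  · rw [evalT_app, List.map_nil, hi]
termination_by i - j

theorem evalT_Uterm {φ : List D → D} {i : ℕ} (hi : 1 ≤ i)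
    (hvf : ∀ j, 1 ≤ j → j ≤ i →
      I.fn (vf j) [] = φ ((List.range' 1 k).map fun l => evalT I (hatS j l))) :
    evalT I (Uterm vf hatS k i) = φ ((List.range' 1 k).map fun l => evalT I (hatS i l)) :=
  evalT_Vterm (hvf i hi le_rfl) fun j hj hji hC => by
    rw [hvf j hj hji.le, evalF_Cform.1 hC]

theorem evalT_stepT {i : ℕ}
    (hU : ∀ j, 1 ≤ j → j ≤ i → evalT I (Uterm vf hatS k j) = evalT I (Ts j))
    (T : EufTerm Fn Pr) : evalT I (stepT Ts vf hatS k i T) = evalT I T := by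
  induction i generalizing T with
  | zero => rw [stepT]
  | succ i ih =>
    have hstep := ih fun j hj hji => hU j hj (hji.trans i.le_succ)
    have hTU : evalT I (stepT Ts vf hatS k i (Ts (i + 1))) = evalT I (Uterm vf hatS k (i + 1)) := by
      rw [hstep, hU (i + 1) i.succ_pos le_rfl]
    rw [stepT, evalT_substT hTU, hstep]

theorem evalF_stepF {i : ℕ}
    (hU : ∀ j, 1 ≤ j → j ≤ i → evalT I (Uterm vf hatS k j) = evalT I (Ts j))
    (F : EufFormula Fn Pr) : evalF I (stepF Ts vf hatS k i F) = evalF I F := by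
  induction i with
  | zero => rw [stepF]
  | succ i ih =>
    have hU' : ∀ j, 1 ≤ j → j ≤ i → evalT I (Uterm vf hatS k j) = evalT I (Ts j) :=
      fun j hj hji => hU j hj (hji.trans i.le_succ)
    have hTU : evalT I (stepT Ts vf hatS k i (Ts (i + 1))) = evalT I (Uterm vf hatS k (i + 1)) := by
      rw [evalT_stepT hU', hU (i + 1) i.succ_pos le_rfl]
    rw [stepF, evalF_substF hTU, ih hU']

theorem fordT_le (T : EufTerm Fn Pr) : fordT n Ts T ≤ n :=
  csSup_le' fun _ hi => hi.2.1

theorem fordF_le (F : EufFormula Fn Pr) : fordF n Ts F ≤ n :=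
  csSup_le' fun _ hi => hi.2.1

/-- The nested-ITE construction for applications `Ts 1, …, Ts n` of `f`, ordered so that subterms
precede superterms. Unlike in `ElimHyps`, there is no ambient formula: when the terms occur in `G`,
they may be any selection of its `f`-application terms, and `f` is then eliminated only there. -/
structure NestedElim (f : Fn) (k n : ℕ) (Ts : ℕ → EufTerm Fn Pr) (S : ℕ → ℕ → EufTerm Fn Pr)
    (vf : ℕ → Fn) (hatS : ℕ → ℕ → EufTerm Fn Pr) : Prop where
  ts_app : ∀ i, 1 ≤ i → i ≤ n → Ts i = EufTerm.app f ((List.range' 1 k).map (S i))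
  ts_order : ∀ i j, 1 ≤ i → i ≤ n → 1 ≤ j → j ≤ n → TermInT (Ts i) (Ts j) → i ≠ j → i < j
  hatS_spec : ∀ j l, 1 ≤ j → j ≤ n → 1 ≤ l → l ≤ k → hatS j l = hatT n Ts vf hatS k (S j l)

theorem ElimHyps.nestedElim {G : EufFormula Fn Pr} (h : ElimHyps G f k n Ts S vf hatS) :
    NestedElim f k n Ts S vf hatS :=
  ⟨h.ts_app, h.ts_order, h.hatS_spec⟩

namespace NestedElim

theorem fordT_arg_lt (h : NestedElim f k n Ts S vf hatS) {j l : ℕ} (hj : 1 ≤ j) (hjn : j ≤ n)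
    (hl : l ∈ List.range' 1 k) : fordT n Ts (S j l) < j := by
  have harg : ImmSub (.t (S j l)) (.t (Ts j)) := by
    rw [h.ts_app j hj hjn]
    exact .appArg (List.mem_map_of_mem hl)
  refine Nat.lt_of_le_pred hj (csSup_le' ?_)
  rintro i ⟨hi, hin, hTi⟩
  have hij : i ≠ j := by
    rintro rfl
    exact harg.not_subExpr hTi
  exact Nat.le_pred_of_lt (h.ts_order i j hi hin hj hjn (hTi.tail harg) hij)

theorem evalT_Ts (h : NestedElim f k n Ts S vf hatS) {i : ℕ} (hi : 1 ≤ i) (hin : i ≤ n) :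
    evalT I (Ts i) = I.fn f ((List.range' 1 k).map fun l => evalT I (S i l)) := by
  rw [h.ts_app i hi hin, evalT_app, List.map_map, Function.comp_def]

theorem evalT_hatS (h : NestedElim f k n Ts S vf hatS) {j l : ℕ} (hj : 1 ≤ j) (hjn : j ≤ n)
    (hl : l ∈ List.range' 1 k)
    (hU : ∀ m, 1 ≤ m → m < j → evalT I (Uterm vf hatS k m) = evalT I (Ts m)) :
    evalT I (hatS j l) = evalT I (S j l) := by
  obtain ⟨hl₁, hlk⟩ := List.mem_range'_1.1 hl
  rw [h.hatS_spec j l hj hjn hl₁ (by omega)]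
  exact evalT_stepT (fun m hm hml => hU m hm (hml.trans_lt (h.fordT_arg_lt hj hjn hl))) _

theorem evalT_Uterm_eq (h : NestedElim f k n Ts S vf hatS)
    (hvf : ∀ i, 1 ≤ i → i ≤ n → I.fn (vf i) [] = evalT I (Ts i)) (i : ℕ) (hi : 1 ≤ i)
    (hin : i ≤ n) : evalT I (Uterm vf hatS k i) = evalT I (Ts i) := by
  induction i using Nat.strong_induction_on with
  | _ i ih =>
    have hTs : ∀ j, 1 ≤ j → j ≤ i →
        evalT I (Ts j) = I.fn f ((List.range' 1 k).map fun l => evalT I (hatS j l)) := by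
      intro j hj hji
      rw [h.evalT_Ts hj (hji.trans hin)]
      congr 1
      exact List.map_congr_left fun l hl => (h.evalT_hatS hj (hji.trans hin) hl fun m hm hmj =>
        ih m (hmj.trans_le hji) hm (by omega)).symm
    rw [hTs i hi le_rfl]
    exact evalT_Uterm hi fun j hj hji => (hvf j hj (hji.trans hin)).trans (hTs j hj hji)

theorem evalT_hatT (h : NestedElim f k n Ts S vf hatS)
    (hvf : ∀ i, 1 ≤ i → i ≤ n → I.fn (vf i) [] = evalT I (Ts i)) (T : EufTerm Fn Pr) :
    evalT I (hatT n Ts vf hatS k T) = evalT I T :=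
  evalT_stepT (fun i hi hiT => h.evalT_Uterm_eq hvf i hi (hiT.trans (fordT_le T))) T

theorem evalF_hatF (h : NestedElim f k n Ts S vf hatS)
    (hvf : ∀ i, 1 ≤ i → i ≤ n → I.fn (vf i) [] = evalT I (Ts i)) (F : EufFormula Fn Pr) :
    evalF I (hatF n Ts vf hatS k F) = evalF I F :=
  evalF_stepF (fun i hi hiF => h.evalT_Uterm_eq hvf i hi (hiF.trans (fordF_le F))) F

end NestedElim

theorem G_hG_lemma_general {G : EufFormula Fn Pr} (h : NestedElim f k n Ts S vf hatS)
    (ts_occurs : ∀ i, 1 ≤ i → i ≤ n → TermInF (Ts i) G)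
    (vf_fresh : ∀ i, 1 ≤ i → i ≤ n → ¬ FnInF (vf i) G)
    (vf_inj : ∀ i j, 1 ≤ i → i ≤ n → 1 ≤ j → j ≤ n → vf i = vf j → i = j)
    (J : Interp Fn Pr D) :
    ∃ Jh : Interp Fn Pr D,
      (∀ g : Fn, FnInF g G → Jh.fn g = J.fn g) ∧
      (∀ p : Pr, PrInF p G → Jh.pr p = J.pr p) ∧
      (∀ T : EufTerm Fn Pr, TermInF T G →
        evalT Jh (hatT n Ts vf hatS k T) = evalT Jh T ∧ evalT Jh T = evalT J T) ∧
      (∀ E : EufFormula Fn Pr, FormulaInF E G →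
        evalF Jh (hatF n Ts vf hatS k E) = evalF Jh E ∧ evalF Jh E = evalF J E) := by
  let Jh := J.assignVars (Set.Icc 1 n) vf fun i => evalT J (Ts i)
  have hinj : Set.InjOn vf (Set.Icc 1 n) :=
    fun i hi j hj hij => vf_inj i j hi.1 hi.2 hj.1 hj.2 hij
  have hagree : AgreeOn Jh J (.f G) :=
    .assignVars J _ fun i hi args hocc => vf_fresh i hi.1 hi.2 ⟨args, hocc⟩
  have hvf : ∀ i, 1 ≤ i → i ≤ n → Jh.fn (vf i) [] = evalT Jh (Ts i) := fun i hi hin =>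
    (J.assignVars_fn_apply hinj _ ⟨hi, hin⟩ []).trans
      (hagree.mono (ts_occurs i hi hin)).evalT_eq.symm
  exact ⟨Jh, fun g ⟨args, hg⟩ => hagree.1 g args hg, fun p ⟨args, hp⟩ => hagree.2 p args hp,
    fun T hT => ⟨h.evalT_hatT hvf T, (hagree.mono hT).evalT_eq⟩,
    fun E hE => ⟨h.evalF_hatF hvf E, (hagree.mono hE).evalF_eq⟩⟩

end Elimination

/-- Any interpretation `J` of the symbols in `G` can be extended to an
interpretation `Ĵ` (of the symbols in both `G` and `Ĝ`) such that for every subexpression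
`E` of `G`, `Ĵ[Ê] = Ĵ[E] = J[E]`. -/
theorem G_hG_lemma {Fn Pr D : Type} [Nonempty D] (G : EufFormula Fn Pr) (f : Fn)
    (k n : ℕ) (Ts : ℕ → EufTerm Fn Pr) (S : ℕ → ℕ → EufTerm Fn Pr) (vf : ℕ → Fn)
    (hatS : ℕ → ℕ → EufTerm Fn Pr) (he : ElimHyps G f k n Ts S vf hatS)
    (J : Interp Fn Pr D) :
    ∃ Jh : Interp Fn Pr D,
      (∀ g : Fn, FnInF g G → Jh.fn g = J.fn g) ∧
      (∀ p : Pr, PrInF p G → Jh.pr p = J.pr p) ∧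
      (∀ T : EufTerm Fn Pr, TermInF T G →
        evalT Jh (hatT n Ts vf hatS k T) = evalT Jh T ∧ evalT Jh T = evalT J T) ∧
      (∀ E : EufFormula Fn Pr, FormulaInF E G →
        evalF Jh (hatF n Ts vf hatS k E) = evalF Jh E ∧ evalF Jh E = evalF J E) :=
  G_hG_lemma_general he.nestedElim he.ts_occurs he.vf_fresh he.vf_inj J
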